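/- arXiv:1812.08897 — 2 statements merged into one kernel-verified Lean document; each statement's English description precedes it below -/
import Mathlib

section
/- Let M be a quasi-projective left R-module which is the internal direct sum M = ⨁_{i∈I} M_i of an independent family of submodules M_i, each of which is fully invariant in M. Then M is strongly harmonic if and only if each M_i (regarded as an R-module) is strongly harmonic. -/
/-!
A fully invariant submodule `A` with a fully invariant complement `C` and projection `p : M → A`
governs its own part of the fully invariant lattice: intersecting with `A`, mapping back into `M`
and pulling back along `p` all preserve full invariance. Pulling back along `p` sends maximal fully
invariant submodules of `A` to maximal ones of `M` (`isMaxFI_comap_proj`), and conversely a maximal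
fully invariant `N` not containing `A` must contain `C` and is the pullback of the maximal fully
invariant submodule `N ∩ A` of `A` (`isMaxFI_comap_subtype`, `le_of_isMaxFI`).

For `A = M_i` the complement is `⨆ j ≠ i, M_j`, and every maximal fully invariant `N` misses some
`M_i`. Two maximal fully invariant submodules missing the same `M_i` are separated inside `M_i`;
if they miss `M_i` and `M_j` with `i ≠ j`, then `M_i` and `M_j` themselves separate them, because
`M_j ·_M M_i ≤ M_j ∩ M_i = 0`. In the other direction, a separation in `M` restricts to `M_i`.
-/

open Submodule

variable {R : Type*} [Ring R] {M : Type*} [AddCommGroup M] [Module R M]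

/-- The product `N ·_M L = Σ { f(N) : f ∈ Hom_R(M, L) }` of submodules of `M`. -/
def SmProd (N L : Submodule R M) : Submodule R M :=
  ⨆ f : M →ₗ[R] L, N.map (L.subtype ∘ₗ f)

/-- A submodule is fully invariant if it is stable under every endomorphism of `M`. -/
def IsFI (N : Submodule R M) : Prop :=
  ∀ f : M →ₗ[R] M, N.map f ≤ N

/-- `N` is a maximal proper fully invariant submodule of `M`
(a coatom of the lattice of fully invariant submodules). -/
def IsMaxFI (N : Submodule R M) : Prop :=
  IsFI N ∧ N ≠ ⊤ ∧ ∀ L : Submodule R M, IsFI L → N < L → L = ⊤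

/-- `M` is strongly harmonic if for every pair of distinct maximal proper fully invariant
submodules `N, L` there are fully invariant `N', L'` with `N' ⊄ N`, `L' ⊄ L`, `L' ·_M N' = 0`. -/
def StronglyHarmonic (R M : Type*) [Ring R] [AddCommGroup M] [Module R M] : Prop :=
  ∀ N L : Submodule R M, IsMaxFI N → IsMaxFI L → N ≠ L →
    ∃ N' L' : Submodule R M, IsFI N' ∧ IsFI L' ∧ ¬ N' ≤ N ∧ ¬ L' ≤ L ∧ SmProd L' N' = ⊥

/-- `Ann_M(K) = Σ { L ≤ M : L ·_M K = 0 }`. -/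
def AnnM (K : Submodule R M) : Submodule R M :=
  sSup {L : Submodule R M | SmProd L K = ⊥}

/-- `Ler(N) = Σ { K fully invariant : N + Ann_M(K) = M }`. -/
def Ler (N : Submodule R M) : Submodule R M :=
  sSup {K : Submodule R M | IsFI K ∧ N ⊔ AnnM K = ⊤}

/-- `M` is quasi-projective. -/
def QuasiProjective (R M : Type*) [Ring R] [AddCommGroup M] [Module R M] : Prop :=
  ∀ (K : Submodule R M) (h : M →ₗ[R] M ⧸ K), ∃ g : M →ₗ[R] M, K.mkQ ∘ₗ g = h

/-- The lattice `Λ^{fi}(M)` of fully invariant submodules is compact. -/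
def FICompact (R M : Type*) [Ring R] [AddCommGroup M] [Module R M] : Prop :=
  ∀ S : Set (Submodule R M), (∀ N ∈ S, IsFI N) → sSup S = ⊤ →
    ∃ F : Finset (Submodule R M), ↑F ⊆ S ∧ sSup (F : Set (Submodule R M)) = ⊤

/-- The lattice `Λ^{fi}(M)` is normal. -/
def FINormal (R M : Type*) [Ring R] [AddCommGroup M] [Module R M] : Prop :=
  ∀ N L : Submodule R M, IsFI N → IsFI L → N ⊔ L = ⊤ →
    ∃ N' L' : Submodule R M, IsFI N' ∧ IsFI L' ∧
      N ⊔ L' = ⊤ ∧ N' ⊔ L = ⊤ ∧ SmProd N' L' = ⊥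

/-- Gelfand module. -/
def Gelfand (R M : Type*) [Ring R] [AddCommGroup M] [Module R M] : Prop :=
  ∀ N L : Submodule R M, IsCoatom N → IsCoatom L → N ≠ L →
    ∃ N' L' : Submodule R M, IsFI N' ∧ IsFI L' ∧ ¬ N' ≤ N ∧ ¬ L' ≤ L ∧ SmProd L' N' = ⊥

/-- The hull-kernel topology on `mx^{fi}(M)`, generated by the sets
`m(K) = {𝓜 : K ⊄ 𝓜}` for `K` fully invariant. -/
def mxfiTop (R M : Type*) [Ring R] [AddCommGroup M] [Module R M] :
    TopologicalSpace {N : Submodule R M // IsMaxFI N} :=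
  TopologicalSpace.generateFrom
    {U | ∃ K : Submodule R M, IsFI K ∧ U = {𝓜 : {N : Submodule R M // IsMaxFI N} | ¬ K ≤ 𝓜.1}}

/-- The frame `Ψ(M)`. -/
def PsiSet (R M : Type*) [Ring R] [AddCommGroup M] [Module R M] : Set (Submodule R M) :=
  {N | IsFI N ∧ ∀ n ∈ N, N ⊔ AnnM (Submodule.span R {n}) = ⊤}

/-- The points (`∧`-irreducible elements) of `Ψ(M)`. -/
def PsiPt (R M : Type*) [Ring R] [AddCommGroup M] [Module R M] : Set (Submodule R M) :=
  {p | p ∈ PsiSet R M ∧ p ≠ ⊤ ∧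
    ∀ N ∈ PsiSet R M, ∀ L ∈ PsiSet R M, N ⊓ L ≤ p → N ≤ p ∨ L ≤ p}

/-- The topology on the point space of `Ψ(M)`, with opens generated by
`U(N) = {p : N ⊄ p}` for `N ∈ Ψ(M)`. -/
def psiPtTop (R M : Type*) [Ring R] [AddCommGroup M] [Module R M] :
    TopologicalSpace (PsiPt R M) :=
  TopologicalSpace.generateFrom
    {U | ∃ N ∈ PsiSet R M, U = {p : PsiPt R M | ¬ N ≤ p.1}}

section Aux

theorem smProd_eq_bot_iff {N L : Submodule R M} :
    SmProd N L = ⊥ ↔ ∀ f : M →ₗ[R] L, ∀ x ∈ N, f x = 0 := by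
  simp only [SmProd, iSup_eq_bot, Submodule.eq_bot_iff]
  constructor
  · intro h f x hx
    exact Subtype.ext (h f _ ⟨x, hx, rfl⟩)
  · rintro h f _ ⟨x, hx, rfl⟩
    simp [h f x hx]

theorem IsFI.apply_mem {N : Submodule R M} (h : IsFI N) (f : M →ₗ[R] M) {x : M} (hx : x ∈ N) :
    f x ∈ N := h f (Submodule.mem_map_of_mem hx)

theorem isFI_of_apply_mem {N : Submodule R M} (h : ∀ f : M →ₗ[R] M, ∀ x ∈ N, f x ∈ N) :
    IsFI N := by
  rintro f _ ⟨x, hx, rfl⟩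
  exact h f x hx

theorem isFI_iSup {κ : Sort*} {N : κ → Submodule R M} (h : ∀ k, IsFI (N k)) :
    IsFI (⨆ k, N k) := by
  intro f
  rw [Submodule.map_iSup]
  exact iSup_mono fun k => h k f

theorem IsFI.sup {N L : Submodule R M} (hN : IsFI N) (hL : IsFI L) : IsFI (N ⊔ L) := by
  intro f
  rw [Submodule.map_sup]
  exact sup_le_sup (hN f) (hL f)

theorem isFI_map_subtype {A : Submodule R M} (hA : IsFI A) {B : Submodule R A} (hB : IsFI B) :
    IsFI (B.map A.subtype) := by
  apply isFI_of_apply_mem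
  rintro f _ ⟨x, hx, rfl⟩
  exact ⟨_, hB.apply_mem (f.restrict fun y hy => hA.apply_mem f hy) hx, rfl⟩

variable {A C : Submodule R M}

/-- The projection of `M` onto `A` along a complement `C`. -/
noncomputable def proj (h : IsCompl A C) : M →ₗ[R] A := A.projectionOnto C h

theorem proj_coe (h : IsCompl A C) (x : A) : proj h x = x :=
  Submodule.projectionOnto_apply_left h x

theorem sub_proj_mem (h : IsCompl A C) (x : M) : x - proj h x ∈ C := by
  have : proj h (x - proj h x) = 0 := by rw [map_sub, proj_coe, sub_self]
  exact (Submodule.projectionOnto_apply_eq_zero_iff h).1 this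

theorem proj_eq_zero (h : IsCompl A C) {x : M} (hx : x ∈ C) : proj h x = 0 :=
  (Submodule.projectionOnto_apply_eq_zero_iff h).2 hx

theorem IsFI.proj_mem {N : Submodule R M} (hN : IsFI N) (h : IsCompl A C) {x : M} (hx : x ∈ N) :
    (proj h x : M) ∈ N :=
  hN.apply_mem (A.subtype ∘ₗ proj h) hx

theorem isFI_comap_subtype (h : IsCompl A C) {N : Submodule R M} (hN : IsFI N) :
    IsFI (N.comap A.subtype) := by
  apply isFI_of_apply_mem
  intro f x hx
  have := hN.apply_mem (A.subtype ∘ₗ f ∘ₗ proj h) hx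
  simpa [proj_coe] using this

theorem isFI_comap_proj (h : IsCompl A C) (hA : IsFI A) (hC : IsFI C) {B : Submodule R A}
    (hB : IsFI B) : IsFI (B.comap (proj h)) := by
  apply isFI_of_apply_mem
  intro f x hx
  -- `f` preserves `C`, so the component of `f x` in `A` is `f` of the component of `x`.
  have h0 : proj h (f (x - proj h x)) = 0 := proj_eq_zero h (hC.apply_mem f (sub_proj_mem h x))
  have h1 : proj h (f x) = proj h (f (proj h x)) := by
    rwa [map_sub, map_sub, sub_eq_zero] at h0
  have h2 : proj h (f (proj h x)) = (f.restrict fun y hy => hA.apply_mem f hy) (proj h x) :=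
    proj_coe h ((f.restrict fun y hy => hA.apply_mem f hy) (proj h x))
  rw [Submodule.mem_comap, h1, h2]
  exact hB.apply_mem _ hx

theorem isMaxFI_comap_proj (h : IsCompl A C) (hA : IsFI A) (hC : IsFI C) {B : Submodule R A}
    (hB : IsMaxFI B) : IsMaxFI (B.comap (proj h)) := by
  obtain ⟨hB1, hB2, hB3⟩ := hB
  refine ⟨isFI_comap_proj h hA hC hB1, ?_, ?_⟩
  · intro ht
    refine hB2 (eq_top_iff.2 fun x _ => ?_)
    have : (x : M) ∈ B.comap (proj h) := ht ▸ Submodule.mem_top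
    simpa [proj_coe] using this
  · intro K hK hlt
    obtain ⟨hle, k, hkK, hk⟩ := SetLike.lt_iff_le_and_exists.1 hlt
    have hKA : K.comap A.subtype = ⊤ := by
      refine hB3 _ (isFI_comap_subtype h hK) (SetLike.lt_iff_le_and_exists.2
        ⟨fun x hx => hle ?_, proj h k, hK.proj_mem h hkK, hk⟩)
      simpa [proj_coe] using hx
    refine eq_top_iff.2 fun x _ => ?_
    have h1 : (proj h x : M) ∈ K := by
      have : proj h x ∈ K.comap A.subtype := hKA ▸ Submodule.mem_top
      exact this
    have h2 : x - proj h x ∈ K := hle (by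
      rw [Submodule.mem_comap, proj_eq_zero h (sub_proj_mem h x)]; exact B.zero_mem)
    simpa using K.add_mem h2 h1

/-- Otherwise `N ⊔ C = ⊤`, and projecting to `A`, which kills `C` and preserves `N`, gives
`A ≤ N`. -/
theorem le_of_isMaxFI (h : IsCompl A C) (hC : IsFI C) {N : Submodule R M}
    (hN : IsMaxFI N) (hAN : ¬ A ≤ N) : C ≤ N := by
  by_contra hCN
  have ht := hN.2.2 _ (hN.1.sup hC) (left_lt_sup.2 hCN)
  refine hAN fun a ha => ?_
  obtain ⟨n, hn, c, hc, hnc⟩ := Submodule.mem_sup.1 (ht ▸ Submodule.mem_top : a ∈ N ⊔ C)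
  have h1 : proj h n = ⟨a, ha⟩ := by
    rw [← proj_coe h ⟨a, ha⟩]
    simp only
    rw [← hnc, map_add, proj_eq_zero h hc, add_zero]
  have h2 := hN.1.proj_mem h hn
  rwa [h1] at h2

/-- A fully invariant submodule containing `C` is the pullback of its trace on `A`. -/
theorem comap_proj_comap_subtype (h : IsCompl A C) {N : Submodule R M} (hN : IsFI N)
    (hCN : C ≤ N) : (N.comap A.subtype).comap (proj h) = N := by
  refine le_antisymm (fun x hx => ?_) fun x hx => hN.proj_mem h hx
  have h1 : (proj h x : M) ∈ N := hx
  simpa using N.add_mem (hCN (sub_proj_mem h x)) h1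

theorem isMaxFI_comap_subtype (h : IsCompl A C) (hA : IsFI A) (hC : IsFI C) {N : Submodule R M}
    (hN : IsMaxFI N) (hAN : ¬ A ≤ N) : IsMaxFI (N.comap A.subtype) := by
  refine ⟨isFI_comap_subtype h hN.1, ?_, ?_⟩
  · rwa [Ne, Submodule.comap_subtype_eq_top]
  · intro K hK hlt
    obtain ⟨hle, k, hkK, hk⟩ := SetLike.lt_iff_le_and_exists.1 hlt
    have hle' : N ≤ K.comap (proj h) := fun x hx => hle (hN.1.proj_mem h hx)
    have ht : K.comap (proj h) = ⊤ := by
      refine hN.2.2 _ (isFI_comap_proj h hA hC hK) (SetLike.lt_iff_le_and_exists.2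
        ⟨hle', (k : M), ?_, hk⟩)
      rwa [Submodule.mem_comap, proj_coe]
    refine eq_top_iff.2 fun x _ => ?_
    have : (x : M) ∈ K.comap (proj h) := ht ▸ Submodule.mem_top
    rwa [Submodule.mem_comap, proj_coe] at this

theorem StronglyHarmonic.of_isCompl (h : IsCompl A C) (hA : IsFI A) (hC : IsFI C)
    (hM : StronglyHarmonic R M) : StronglyHarmonic R A := by
  intro N L hN hL hne
  have hinj : Function.Injective (Submodule.comap (proj h)) :=
    Submodule.comap_injective_of_surjective fun x => ⟨x, proj_coe h x⟩
  obtain ⟨N', L', hN', hL', hNN, hLL, hprod⟩ := hM _ _ (isMaxFI_comap_proj h hA hC hN)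
    (isMaxFI_comap_proj h hA hC hL) (hinj.ne hne)
  refine ⟨N'.comap A.subtype, L'.comap A.subtype, isFI_comap_subtype h hN',
    isFI_comap_subtype h hL', fun hle => hNN fun x hx => hle (hN'.proj_mem h hx),
    fun hle => hLL fun x hx => hle (hL'.proj_mem h hx), ?_⟩
  rw [smProd_eq_bot_iff] at hprod ⊢
  intro f x hx
  -- A map `A → N' ∩ A` extends by zero on `C` to a map `M → N'`.
  let g : M →ₗ[R] N' :=
    (A.subtype ∘ₗ (N'.comap A.subtype).subtype ∘ₗ f ∘ₗ proj h).codRestrict N' fun y =>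
      (f (proj h y)).2
  have h1 : ((f (proj h (x : M)) : A) : M) = 0 := congrArg Subtype.val (hprod g x hx)
  rw [proj_coe] at h1
  exact Subtype.ext (Subtype.ext h1)

/-- Two maximal fully invariant submodules of `M`, neither containing the strongly harmonic
summand `A`, are separated by fully invariant submodules of `A`. -/
theorem exists_separation_of_not_le (h : IsCompl A C) (hA : IsFI A) (hC : IsFI C)
    (hS : StronglyHarmonic R A) {N L : Submodule R M} (hN : IsMaxFI N) (hL : IsMaxFI L)
    (hne : N ≠ L) (hAN : ¬ A ≤ N) (hAL : ¬ A ≤ L) :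
    ∃ N' L' : Submodule R M, IsFI N' ∧ IsFI L' ∧ ¬ N' ≤ N ∧ ¬ L' ≤ L ∧ SmProd L' N' = ⊥ := by
  have hne' : N.comap A.subtype ≠ L.comap A.subtype := by
    intro heq
    apply hne
    rw [← comap_proj_comap_subtype h hN.1 (le_of_isMaxFI h hC hN hAN), heq,
      comap_proj_comap_subtype h hL.1 (le_of_isMaxFI h hC hL hAL)]
  obtain ⟨N', L', hN', hL', hNN, hLL, hprod⟩ := hS _ _ (isMaxFI_comap_subtype h hA hC hN hAN)
    (isMaxFI_comap_subtype h hA hC hL hAL) hne'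
  refine ⟨N'.map A.subtype, L'.map A.subtype, isFI_map_subtype hA hN', isFI_map_subtype hA hL',
    by rwa [Submodule.map_le_iff_le_comap], by rwa [Submodule.map_le_iff_le_comap], ?_⟩
  rw [smProd_eq_bot_iff] at hprod ⊢
  rintro f _ ⟨x, hx, rfl⟩
  have hmem : ∀ y : M, ∃ a ∈ N', (a : M) = f y := fun y => (f y).2
  -- A map from `M` to the copy of `N'` in `M` restricts to a map `A → N'`.
  let g : A →ₗ[R] N' :=
    (proj h ∘ₗ (N'.map A.subtype).subtype ∘ₗ f ∘ₗ A.subtype).codRestrict N' fun y => by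
      obtain ⟨a, ha, hay⟩ := hmem y
      have : proj h (f y : M) = a := by rw [← hay, proj_coe]
      simpa [this] using ha
  have h1 : proj h (f x : M) = 0 := congrArg Subtype.val (hprod g x hx)
  obtain ⟨a, -, hay⟩ := hmem x
  rw [← hay, proj_coe] at h1
  apply Subtype.ext
  rw [A.subtype_apply, ← hay, h1]
  rfl

end Aux

/-- Let `M` be quasi-projective and an internal direct sum of an independent
family of fully invariant submodules `Mi`. Then `M` is strongly harmonic iff each `Mi` is. -/
theorem stronglyHarmonic_iff_forall_of_internal_directSum
    (hqp : QuasiProjective R M) {ι : Type*} (Mi : ι → Submodule R M)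
    (hind : iSupIndep Mi) (hsum : ⨆ i, Mi i = ⊤) (hfi : ∀ i, IsFI (Mi i)) :
    StronglyHarmonic R M ↔ ∀ i, StronglyHarmonic R (Mi i) := by
  have hcompl : ∀ i, IsCompl (Mi i) (⨆ (j) (_ : j ≠ i), Mi j) := by
    refine fun i => ⟨hind i, codisjoint_iff.2 (eq_top_iff.2 (hsum ▸ iSup_le fun j => ?_))⟩
    by_cases hj : j = i
    · exact hj ▸ le_sup_left
    · exact le_sup_of_le_right (le_iSup₂_of_le j hj le_rfl)
  have hC : ∀ i, IsFI (⨆ (j) (_ : j ≠ i), Mi j) := fun i =>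
    isFI_iSup fun j => isFI_iSup fun _ => hfi j
  constructor
  · exact fun hM i => hM.of_isCompl (hcompl i) (hfi i) (hC i)
  · intro hS N L hN hL hne
    have hmiss : ∀ K : Submodule R M, K ≠ ⊤ → ∃ i, ¬ Mi i ≤ K := by
      intro K hK
      by_contra! hall
      exact hK (eq_top_iff.2 (hsum ▸ iSup_le hall))
    obtain ⟨i, hi⟩ := hmiss N hN.2.1
    obtain ⟨j, hj⟩ := hmiss L hL.2.1
    by_cases hij : i = j
    · subst hij
      exact exists_separation_of_not_le (hcompl i) (hfi i) (hC i) (hS i) hN hL hne hi hj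
    · -- Distinct summands annihilate each other, so they separate `N` from `L`.
      refine ⟨Mi i, Mi j, hfi i, hfi j, hi, hj, smProd_eq_bot_iff.2 fun f x hx => ?_⟩
      exact Subtype.ext (Submodule.disjoint_def.1 (hind.pairwiseDisjoint hij) _ (f x).2
        ((hfi j).apply_mem ((Mi i).subtype ∘ₗ f) hx))
end

section
/- Let M be a projective strongly harmonic left R-module. If F is a compact subset of the space mx^fi(M) (with the hull-kernel topology) and N ∈ mx^fi(M) with N ∉ F, then there exist fully invariant submodules L, K of M such that N ∈ m(K), F ⊆ m(L), and L·_M K = 0. Moreover, if mx^fi(M) is a compact space, then mx^fi(M) is a normal topological space. -/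
/-!
Projectivity makes every maximal fully invariant submodule `P` prime for the product. If `L` is
fully invariant and not contained in `P`, then `P ⊔ L = ⊤`, so the addition map `P × L → M` is onto
and the identity of `M` lifts through it. The second component of the lift is a map `M → L`
carrying `K` into `K ·_M L`, whence `K ≤ P ⊔ K ·_M L`. Thus `K ·_M L ≤ P` forces `K ≤ P`
(`IsMaxFI.le_or_le_of_smProd_le`).

The first claim follows by induction on the compact set. Strong harmonicity gives a suitable pair
near each point of `F`, and pairs `(L₁, K₁)`, `(L₂, K₂)` for two subsets combine to
`(L₁ ⊔ L₂, K₁ ·_M K₂)` for their union, where primeness keeps `K₁ ·_M K₂` outside `N`.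

For the second claim, primeness shows that `L ·_M K = 0` makes `m(L)` and `m(K)` disjoint. Strong
harmonicity therefore says that `mx^fi(M)` is Hausdorff, and compact Hausdorff spaces are normal.
-/

open Submodule

variable {R : Type*} [Ring R] {M : Type*} [AddCommGroup M] [Module R M]

theorem map_le_smProd (N L : Submodule R M) (f : M →ₗ[R] L) :
    N.map (L.subtype ∘ₗ f) ≤ SmProd N L :=
  le_iSup (fun f : M →ₗ[R] L => N.map (L.subtype ∘ₗ f)) f

theorem smProd_le_right (N L : Submodule R M) : SmProd N L ≤ L := by
  refine iSup_le fun f => ?_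
  rintro _ ⟨x, -, rfl⟩
  exact (f x).2

theorem smProd_le_left {N : Submodule R M} (hN : IsFI N) (L : Submodule R M) :
    SmProd N L ≤ N :=
  iSup_le fun _ => hN _

theorem smProd_mono_right (N : Submodule R M) {L L' : Submodule R M} (h : L ≤ L') :
    SmProd N L ≤ SmProd N L' := by
  refine iSup_le fun f => le_trans ?_ (map_le_smProd N L' (Submodule.inclusion h ∘ₗ f))
  rintro _ ⟨x, hx, rfl⟩
  exact ⟨x, hx, rfl⟩

theorem sup_smProd_le (N N' L : Submodule R M) :
    SmProd (N ⊔ N') L ≤ SmProd N L ⊔ SmProd N' L := by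
  refine iSup_le fun f => ?_
  rw [Submodule.map_sup]
  exact sup_le_sup (map_le_smProd N L f) (map_le_smProd N' L f)

theorem bot_smProd (L : Submodule R M) : SmProd ⊥ L = ⊥ := by
  simp [SmProd]

theorem isFI_bot : IsFI (⊥ : Submodule R M) := fun f => by simp

theorem isFI_top : IsFI (⊤ : Submodule R M) := fun _ => le_top

/-- An endomorphism `g` preserves `L`, so it turns a map `M → L` into another such map. -/
theorem IsFI.smProd (N : Submodule R M) {L : Submodule R M} (hL : IsFI L) :
    IsFI (SmProd N L) := by
  intro g
  unfold SmProd
  rw [Submodule.map_iSup]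
  refine iSup_le fun f => ?_
  have hg : ∀ x ∈ L, g x ∈ L := fun x hx => hL g ⟨x, hx, rfl⟩
  refine le_trans ?_ (map_le_smProd N L (g.restrict hg ∘ₗ f))
  rintro _ ⟨_, ⟨x, hx, rfl⟩, rfl⟩
  exact ⟨x, hx, rfl⟩

/-- Over a projective module, maximal fully invariant submodules are prime for the product. -/
theorem IsMaxFI.le_or_le_of_smProd_le [Module.Projective R M] {P K L : Submodule R M}
    (hP : IsMaxFI P) (hL : IsFI L) (h : SmProd K L ≤ P) : K ≤ P ∨ L ≤ P := by
  by_contra! hc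
  obtain ⟨hKP, hLP⟩ := hc
  have htop : P ⊔ L = ⊤ := hP.2.2 _ (hP.1.sup hL) (left_lt_sup.mpr hLP)
  have hsurj : Function.Surjective (P.subtype.coprod L.subtype) := by
    rw [← LinearMap.range_eq_top, LinearMap.range_coprod]
    simpa using htop
  obtain ⟨g, hg⟩ :=
    Module.projective_lifting_property (P.subtype.coprod L.subtype) LinearMap.id hsurj
  refine hKP fun k hk => ?_
  have hk2 : ((g k).2 : M) ∈ P :=
    h (map_le_smProd K L (LinearMap.snd R P L ∘ₗ g) ⟨k, hk, rfl⟩)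
  have hsum : ((g k).1 : M) + ((g k).2 : M) = k := by
    simpa using LinearMap.congr_fun hg k
  rw [← hsum]
  exact P.add_mem (g k).1.2 hk2

theorem isOpen_mxfi {K : Submodule R M} (hK : IsFI K) :
    @IsOpen _ (mxfiTop R M) {P : {N : Submodule R M // IsMaxFI N} | ¬ K ≤ P.1} :=
  TopologicalSpace.isOpen_generateFrom_of_mem ⟨K, hK, rfl⟩

theorem t2Space_mxfi [Module.Projective R M] (hsh : StronglyHarmonic R M) :
    @T2Space {N : Submodule R M // IsMaxFI N} (mxfiTop R M) := by
  let := mxfiTop R M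
  refine ⟨fun P Q hPQ => ?_⟩
  obtain ⟨K, L, hK, hL, hKP, hLQ, hLK⟩ :=
    hsh P.1 Q.1 P.2 Q.2 fun h => hPQ (Subtype.ext h)
  refine ⟨_, _, isOpen_mxfi hK, isOpen_mxfi hL, hKP, hLQ, ?_⟩
  rw [Set.disjoint_left]
  intro T hKT hLT
  exact (T.2.le_or_le_of_smProd_le hK (hLK.trans_le bot_le)).elim hLT hKT

/-- Let `M` be projective and strongly harmonic. If `F ⊆ mx^{fi}(M)` is
compact and `N ∈ mx^{fi}(M)` with `N ∉ F`, there are fully invariant `L, K` with `N ∈ m(K)`,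
`F ⊆ m(L)` and `L ·_M K = 0`. Moreover, if `mx^{fi}(M)` is compact, it is a normal space. -/
theorem kohModules (hproj : Module.Projective R M) (hsh : StronglyHarmonic R M) :
    (∀ F : Set {N : Submodule R M // IsMaxFI N}, @IsCompact _ (mxfiTop R M) F →
      ∀ N : {N : Submodule R M // IsMaxFI N}, N ∉ F →
        ∃ L K : Submodule R M, IsFI L ∧ IsFI K ∧ ¬ K ≤ N.1 ∧
          (∀ 𝓜 ∈ F, ¬ L ≤ (𝓜 : {N : Submodule R M // IsMaxFI N}).1) ∧ SmProd L K = ⊥) ∧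
    (@CompactSpace {N : Submodule R M // IsMaxFI N} (mxfiTop R M) →
      @NormalSpace {N : Submodule R M // IsMaxFI N} (mxfiTop R M)) := by
  constructor
  · letI := mxfiTop R M
    intro F hF N hNF
    refine hF.induction_on (p := fun s => ∃ L K : Submodule R M, IsFI L ∧ IsFI K ∧ ¬ K ≤ N.1 ∧
      (∀ 𝓜 ∈ s, ¬ L ≤ (𝓜 : {N : Submodule R M // IsMaxFI N}).1) ∧ SmProd L K = ⊥) ?_ ?_ ?_ ?_
    · exact ⟨⊥, ⊤, isFI_bot, isFI_top, fun h => N.2.2.1 (top_le_iff.mp h), by simp,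
        bot_smProd _⟩
    · rintro s t hst ⟨L, K, hL, hK, hKN, ht, hLK⟩
      exact ⟨L, K, hL, hK, hKN, fun P hP => ht P (hst hP), hLK⟩
    · rintro s t ⟨L₁, K₁, hL₁, hK₁, hKN₁, hs, hLK₁⟩ ⟨L₂, K₂, hL₂, hK₂, hKN₂, ht, hLK₂⟩
      refine ⟨L₁ ⊔ L₂, SmProd K₁ K₂, hL₁.sup hL₂, hK₂.smProd K₁, ?_, ?_, ?_⟩
      · exact fun h => (N.2.le_or_le_of_smProd_le hK₂ h).elim hKN₁ hKN₂
      · rintro P (hP | hP) h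
        · exact hs P hP (le_sup_left.trans h)
        · exact ht P hP (le_sup_right.trans h)
      · rw [eq_bot_iff]
        refine (sup_smProd_le _ _ _).trans (sup_le ?_ ?_)
        · exact (smProd_mono_right _ (smProd_le_left hK₁ K₂)).trans hLK₁.le
        · exact (smProd_mono_right _ (smProd_le_right K₁ K₂)).trans hLK₂.le
    · intro P hP
      obtain ⟨K, L, hK, hL, hKN, hLP, hLK⟩ := hsh N.1 P.1 N.2 P.2 fun h => by
        rw [Subtype.ext h] at hNF
        exact hNF hP
      exact ⟨_, mem_nhdsWithin_of_mem_nhds ((isOpen_mxfi hL).mem_nhds hLP),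
        L, K, hL, hK, hKN, fun _ hQ => hQ, hLK⟩
  · letI := mxfiTop R M
    intro hc
    have := t2Space_mxfi hsh
    infer_instance
end
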